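/- (Localized weighted Hardy inequality.) Let 0 ≤ α ≤ 2, μ₁ > −1, μ₂ > 0, t ≥ 0, and 0 ≤ R₁ < R₂ ≤ ∞. Set n(q) := (1+|q|)^{μ₂} for q ≥ 0 and n(q) := (1+|q|)^{−1−μ₁} for q < 0. There exists a constant C depending only on μ₁ and μ₂ such that for every C¹ function ξ on ℝ³ (additionally assumed compactly supported when R₂ = ∞): ∫_{{|x|=R₁}} n(R₁−t) ξ² (1+t+R₁)^{−α} dσ + ∫_{{min(R₁,t) ≤ |x| ≤ min(R₂,t)}} ξ² (1+|q|)^{−2−μ₁} (1+s)^{−α} dx + ∫_{{max(R₁,t) ≤ |x| ≤ max(R₂,t)}} ξ² (1+|q|)^{−1+μ₂} (1+s)^{−α} dx ≤ C [ ∫_{{|x|=R₂}} n(R₂−t) ξ² (1+t+R₂)^{−α} dσ + ∫_{{min(R₁,t) ≤ |x| ≤ min(R₂,t)}} |∂_r ξ|² (1+|q|)^{−μ₁} (1+s)^{−α} dx + ∫_{{max(R₁,t) ≤ |x| ≤ max(R₂,t)}} |∂_r ξ|² (1+|q|)^{1+μ₂} (1+s)^{−α} dx ], where q = |x| − t, s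 = |x| + t, ∂_r is the radial derivative, dσ is the surface measure on the sphere, and when R₂ = ∞ the sphere integral on the right-hand side is omitted. -/

import Mathlib

open MeasureTheory
open scoped ENNReal

/-- The Hardy weight `n(q)`: `(1+|q|)^{μ₂}` for `q ≥ 0` and `(1+|q|)^{−1−μ₁}` for `q < 0`. -/
noncomputable def nwt (μ₁ μ₂ q : ℝ) : ℝ :=
  if 0 ≤ q then (1 + |q|) ^ μ₂ else (1 + |q|) ^ (-1 - μ₁)

/-- The radial derivative `∂_r ξ = (x^i/|x|) ∂_i ξ`. -/
noncomputable def radialDeriv (ξ : EuclideanSpace ℝ (Fin 3) → ℝ)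
    (x : EuclideanSpace ℝ (Fin 3)) : ℝ :=
  fderiv ℝ ξ x (‖x‖⁻¹ • x)


section
open Set Metric Measure Pointwise

local notation "E3" => EuclideanSpace ℝ (Fin 3)

namespace HardyAux

/-- unit cone over a set -/
def cone (A : Set E3) : Set E3 := {y | 0 < ‖y‖ ∧ ‖y‖ < 1 ∧ ‖y‖⁻¹ • y ∈ A}

lemma measurableSet_cone {A : Set E3} (hA : MeasurableSet A) : MeasurableSet (cone A) := by
  have h1 : Measurable (fun y : E3 => ‖y‖⁻¹ • y) := (measurable_norm.inv).smul measurable_id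
  exact (measurableSet_lt measurable_const measurable_norm).inter
    ((measurableSet_lt measurable_norm measurable_const).inter (h1 hA))

/-- coordinates -/
def io (i : Fin 3) (h : ℝ) (v : Fin 2 → ℝ) : E3 := WithLp.toLp 2 (i.insertNth h v)

@[simp] lemma io_same (i : Fin 3) (h : ℝ) (v : Fin 2 → ℝ) : io i h v i = h := by simp [io]
@[simp] lemma io_succ (i : Fin 3) (h : ℝ) (v : Fin 2 → ℝ) (j : Fin 2) :
    io i h v (i.succAbove j) = v j := by simp [io]

lemma ext_io (i : Fin 3) {x y : E3} (h : x i = y i) (h' : ∀ j, x (i.succAbove j) = y (i.succAbove j)) :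
    x = y := by
  ext k
  rcases Fin.eq_self_or_eq_succAbove i k with rfl | ⟨j, rfl⟩
  · exact h
  · exact h' j

lemma smul_io (i : Fin 3) (c h : ℝ) (v : Fin 2 → ℝ) : c • io i h v = io i (c * h) (c • v) := by
  apply ext_io i <;> simp

lemma abs_le_norm (x : E3) (i : Fin 3) : |x i| ≤ ‖x‖ := by
  simpa using PiLp.norm_apply_le x i

lemma io_norm_sq (i : Fin 3) (h : ℝ) (v : Fin 2 → ℝ) : ‖io i h v‖ ^ 2 = h ^ 2 + (v 0 ^ 2 + v 1 ^ 2) := by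
  rw [EuclideanSpace.norm_sq_eq, Fin.sum_univ_succAbove _ i]
  simp [Fin.sum_univ_two]

lemma volume_eq (i : Fin 3) {T : Set E3} (hT : MeasurableSet T) :
    volume T = ∫⁻ h : ℝ, volume {v : Fin 2 → ℝ | io i h v ∈ T} := by
  have h1 := (PiLp.volume_preserving_toLp (Fin 3)).measure_preimage hT.nullMeasurableSet
  have hT' : MeasurableSet ((@WithLp.toLp 2 (Fin 3 → ℝ)) ⁻¹' T) :=
    (PiLp.volume_preserving_toLp (Fin 3)).measurable hT
  have h2 := (volume_preserving_piFinSuccAbove (fun _ : Fin 3 => ℝ) i).symm.measure_preimage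
    hT'.nullMeasurableSet
  have hT2 := (volume_preserving_piFinSuccAbove (fun _ : Fin 3 => ℝ) i).symm.measurable hT'
  rw [← h1, ← h2]
  rw [Measure.volume_eq_prod, Measure.prod_apply hT2]
  rfl

/-- central projection chart -/
noncomputable def gch (i : Fin 3) (ε : ℝ) (v : Fin 2 → ℝ) : E3 := ‖io i ε v‖⁻¹ • io i ε v

/-- inverse chart -/
noncomputable def Gch (i : Fin 3) (a : E3) : Fin 2 → ℝ := fun j => a (i.succAbove j) / |a i|

lemma normalize_lip {x y : E3} (hx : 1 ≤ ‖x‖) (hy : 1 ≤ ‖y‖) :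
    ‖‖x‖⁻¹ • x - ‖y‖⁻¹ • y‖ ≤ 2 * ‖x - y‖ := by
  have hx0 : 0 < ‖x‖ := by linarith
  have hy0 : 0 < ‖y‖ := by linarith
  have e : ‖x‖⁻¹ • x - ‖y‖⁻¹ • y = ‖x‖⁻¹ • (x - y) + (‖x‖⁻¹ * (‖y‖ - ‖x‖)) • (‖y‖⁻¹ • y) := by
    have : ‖x‖⁻¹ * (‖y‖ - ‖x‖) * ‖y‖⁻¹ = ‖x‖⁻¹ - ‖y‖⁻¹ := by field_simp
    rw [smul_smul, this, smul_sub, sub_smul]; abel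
  have hi : ‖x‖⁻¹ ≤ 1 := inv_le_one_of_one_le₀ hx
  have hi0 : 0 ≤ ‖x‖⁻¹ := by positivity
  rw [e]
  refine (norm_add_le _ _).trans ?_
  rw [norm_smul, norm_smul, norm_smul, norm_mul, norm_inv, norm_inv, norm_norm, norm_norm,
    inv_mul_cancel₀ hy0.ne', mul_one]
  have h3 : ‖‖y‖ - ‖x‖‖ ≤ ‖x - y‖ := by
    rw [Real.norm_eq_abs, abs_sub_comm]; exact abs_norm_sub_norm_le x y
  have := mul_le_mul hi h3 (norm_nonneg _) zero_le_one
  have := mul_le_mul hi (le_refl ‖x-y‖) (norm_nonneg _) zero_le_one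
  linarith

lemma one_le_io {i : Fin 3} {ε : ℝ} (hε : |ε| = 1) (v) : 1 ≤ ‖io i ε v‖ := by
  have := abs_le_norm (io i ε v) i
  simpa [hε] using this

lemma gch_lip (i : Fin 3) {ε : ℝ} (hε : |ε| = 1) : LipschitzWith 4 (gch i ε) := by
  refine LipschitzWith.of_dist_le_mul fun v w => ?_
  rw [dist_eq_norm, dist_eq_norm]
  refine (normalize_lip (one_le_io hε v) (one_le_io hε w)).trans ?_
  have e : io i ε v - io i ε w = io i 0 (v - w) := by apply ext_io i <;> simp
  rw [e]
  have : ‖io i 0 (v - w)‖ ≤ 2 * ‖v - w‖ := by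
    refine abs_le_of_sq_le_sq' ?_ (by positivity) |>.2
    rw [io_norm_sq]
    have h0 := norm_le_pi_norm (v - w) 0
    have h1 := norm_le_pi_norm (v - w) 1
    rw [Real.norm_eq_abs] at h0 h1
    have h0' := sq_le_sq' (neg_le_of_abs_le h0) (le_of_abs_le h0)
    have h1' := sq_le_sq' (neg_le_of_abs_le h1) (le_of_abs_le h1)
    nlinarith [sq_nonneg ‖v - w‖]
  simp only [NNReal.coe_ofNat]
  linarith

/-- piece of the sphere -/
def pc (i : Fin 3) (ε : ℝ) : Set E3 := {x | ‖x‖ = 1 ∧ 1/2 ≤ ε * x i}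

lemma pc_abs {i : Fin 3} {ε : ℝ} (hε : |ε| = 1) {a : E3} (ha : a ∈ pc i ε) :
    |a i| = ε * a i ∧ 1/2 ≤ |a i| := by
  have h1 : |ε * a i| = |a i| := by rw [abs_mul, hε, one_mul]
  have h2 := ha.2
  rw [← h1, abs_of_nonneg (by linarith)]
  exact ⟨rfl, h2⟩

lemma io_Gch {i : Fin 3} {ε : ℝ} (hε : |ε| = 1) {a : E3} (ha : a ∈ pc i ε) :
    io i ε (Gch i a) = |a i|⁻¹ • a := by
  obtain ⟨h1, h2⟩ := pc_abs hε ha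
  have h3 : ε * ε = 1 := by rw [← abs_mul_abs_self, hε, one_mul]
  have h4 : |a i| ≠ 0 := by linarith
  apply ext_io i
  · simp only [io_same, PiLp.smul_apply, smul_eq_mul]
    rw [eq_inv_mul_iff_mul_eq₀ h4, h1, mul_right_comm, h3, one_mul]
  · intro j
    simp [Gch, div_eq_inv_mul]

lemma gch_Gch {i : Fin 3} {ε : ℝ} (hε : |ε| = 1) {a : E3} (ha : a ∈ pc i ε) :
    gch i ε (Gch i a) = a := by
  obtain ⟨h1, h2⟩ := pc_abs hε ha
  have h4 : |a i| ≠ 0 := by linarith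
  rw [gch, io_Gch hε ha, norm_smul, ha.1]
  simp [smul_smul, h4]

lemma Gch_smul_io {i : Fin 3} {c h : ℝ} (hc : 0 < c) (v : Fin 2 → ℝ) :
    Gch i (c • io i h v) = |h|⁻¹ • v := by
  ext j
  simp only [Gch, smul_io, io_succ, io_same, abs_mul, abs_of_pos hc, Pi.smul_apply, smul_eq_mul]
  rw [mul_div_mul_left _ _ hc.ne', div_eq_inv_mul]

lemma Gch_gch {i : Fin 3} {ε : ℝ} (hε : |ε| = 1) (v : Fin 2 → ℝ) : Gch i (gch i ε v) = v := by
  rw [gch, Gch_smul_io, hε]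
  · simp
  · have := one_le_io (i := i) hε v
    positivity

lemma Gch_lip {i : Fin 3} {ε : ℝ} (hε : |ε| = 1) : LipschitzOnWith 8 (Gch i) (pc i ε) := by
  refine LipschitzOnWith.of_dist_le_mul fun a ha b hb => ?_
  obtain ⟨-, ha2⟩ := pc_abs hε ha
  obtain ⟨-, hb2⟩ := pc_abs hε hb
  rw [dist_pi_le_iff (by positivity)]
  intro j
  rw [Real.dist_eq, dist_eq_norm]
  set k := i.succAbove j
  have h1 : |a k - b k| ≤ ‖a - b‖ := by simpa using abs_le_norm (a - b) k
  have h2 : |a i - b i| ≤ ‖a - b‖ := by simpa using abs_le_norm (a - b) i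
  have h3 : |b k| ≤ 1 := by simpa [hb.1] using abs_le_norm b k
  have h5 : |(|b i| - |a i|)| ≤ ‖a - b‖ := by
    rw [abs_sub_comm]; exact (abs_abs_sub_abs_le_abs_sub _ _).trans h2
  have ha0 : 0 < |a i| := by linarith
  have hb0 : 0 < |b i| := by linarith
  have e : Gch i a j - Gch i b j = (a k - b k) / |a i| + b k * (|b i| - |a i|) / (|a i| * |b i|) := by
    simp only [Gch]; field_simp; ring
  rw [e]
  refine (abs_add_le _ _).trans ?_
  rw [abs_div, abs_div, abs_mul, abs_mul, abs_abs, abs_abs]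
  have t1 : |a k - b k| / |a i| ≤ 2 * ‖a - b‖ := by
    rw [div_le_iff₀ ha0]; nlinarith [norm_nonneg (a-b)]
  have t2 : |b k| * |(|b i| - |a i|)| / (|a i| * |b i|) ≤ 4 * ‖a - b‖ := by
    rw [div_le_iff₀ (by positivity)]
    have : |b k| * |(|b i| - |a i|)| ≤ 1 * ‖a - b‖ := mul_le_mul h3 h5 (abs_nonneg _) zero_le_one
    have : 1/4 ≤ |a i| * |b i| := by nlinarith
    nlinarith [norm_nonneg (a-b)]
  simp only [NNReal.coe_ofNat]
  nlinarith [norm_nonneg (a-b)]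

lemma muH2_eq : (μH[2] : Measure (Fin 2 → ℝ)) = volume := by
  have := hausdorffMeasure_pi_real (ι := Fin 2)
  simpa using this

lemma chart_le {i : Fin 3} {ε : ℝ} (hε : |ε| = 1) {A : Set E3} (hA : A ⊆ pc i ε) :
    μH[2] A ≤ 16 * volume (gch i ε ⁻¹' A) ∧ volume (gch i ε ⁻¹' A) ≤ 64 * μH[2] A := by
  constructor
  · have h : A ⊆ gch i ε '' (gch i ε ⁻¹' A) := fun a ha =>
      ⟨Gch i a, by simpa [gch_Gch hε (hA ha)] using ha, gch_Gch hε (hA ha)⟩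
    refine (measure_mono h).trans ?_
    refine ((gch_lip i hε).hausdorffMeasure_image_le (d := 2) (by norm_num) _).trans ?_
    rw [muH2_eq]
    gcongr
    norm_num
  · have h : gch i ε ⁻¹' A ⊆ Gch i '' A := fun v hv => ⟨_, hv, Gch_gch hε v⟩
    refine (measure_mono h).trans ?_
    rw [← muH2_eq]
    refine (((Gch_lip hε).mono hA).hausdorffMeasure_image_le (d := 2) (by norm_num)).trans ?_
    gcongr
    norm_num


lemma slice_sub {i : Fin 3} {ε : ℝ} (hε : |ε| = 1) {A : Set E3} (hA : A ⊆ pc i ε) {h : ℝ}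
    {v : Fin 2 → ℝ} (hv : io i h v ∈ cone A) :
    |h| < 1 ∧ v ∈ |h| • (gch i ε ⁻¹' A) := by
  obtain ⟨h1, h2, h3⟩ := hv
  have h4 := pc_abs hε (hA h3)
  have h5 : 0 < |h| := by
    rw [abs_pos]; rintro rfl
    have := h4.2
    rw [smul_io] at this
    norm_num at this
  have h6 := abs_le_norm (io i h v) i
  rw [io_same] at h6
  refine ⟨by linarith, ?_⟩
  rw [Set.mem_smul_set_iff_inv_smul_mem₀ h5.ne']
  rw [Set.mem_preimage, ← Gch_smul_io (i := i) (inv_pos.2 h1), gch_Gch hε (hA h3)]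
  exact h3

lemma sub_slice {i : Fin 3} {ε : ℝ} (hε : |ε| = 1) {A : Set E3} (hA : A ⊆ pc i ε) {h : ℝ}
    (hh : 0 < ε * h) (hh' : ε * h < 1 / 2)
    {v : Fin 2 → ℝ} (hv : v ∈ |h| • (gch i ε ⁻¹' A)) : io i h v ∈ cone A := by
  obtain ⟨u, hu, rfl⟩ := hv
  have h3 : ε * ε = 1 := by rw [← abs_mul_abs_self, hε, one_mul]
  have h0 : |h| = ε * h := by
    rw [← abs_of_pos hh, abs_mul, hε, one_mul]
  have e : io i h (|h| • u) = |h| • io i ε u := by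
    rw [smul_io, h0, mul_right_comm, h3, one_mul]
  have h1 := one_le_io (i := i) hε u
  have hp := pc_abs hε (hA hu)
  have hn : |gch i ε u i| = ‖io i ε u‖⁻¹ := by
    simp [gch, abs_mul, hε]
  have hlt : ‖io i ε u‖ ≤ 2 := by
    have := hp.2
    rw [hn, ← one_div, div_le_div_iff₀ (by norm_num) (by linarith)] at this
    linarith
  have hhp : 0 < |h| := by rw [h0]; exact hh
  have hne : ‖io i h (|h| • u)‖ = |h| * ‖io i ε u‖ := by rw [e, norm_smul, Real.norm_eq_abs, abs_abs]
  refine ⟨?_, ?_, ?_⟩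
  · change 0 < ‖io i h (|h| • u)‖
    rw [hne]; positivity
  · change ‖io i h (|h| • u)‖ < 1
    rw [hne, h0]; nlinarith
  · change ‖io i h (|h| • u)‖⁻¹ • io i h (|h| • u) ∈ A
    rw [hne, e, smul_smul]
    have : (|h| * ‖io i ε u‖)⁻¹ * |h| = ‖io i ε u‖⁻¹ := by field_simp
    rw [this]; exact hu

lemma vol_smul (h : ℝ) (B : Set (Fin 2 → ℝ)) :
    volume (|h| • B) = ENNReal.ofReal (h ^ 2) * volume B := by
  rw [Measure.addHaar_smul]
  simp

lemma cone_le {i : Fin 3} {ε : ℝ} (hε : |ε| = 1) {A : Set E3} (hA : A ⊆ pc i ε)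
    (hm : MeasurableSet A) : volume (cone A) ≤ 2 * volume (gch i ε ⁻¹' A) := by
  rw [volume_eq i (measurableSet_cone hm)]
  calc _ ≤ ∫⁻ h : ℝ, (Ioo (-1:ℝ) 1).indicator (fun _ => volume (gch i ε ⁻¹' A)) h := by
        apply lintegral_mono
        intro h
        by_cases hh : h ∈ Ioo (-1:ℝ) 1
        · rw [indicator_of_mem hh]
          refine (measure_mono (t := |h| • (gch i ε ⁻¹' A)) fun v hv => (slice_sub hε hA hv).2).trans ?_
          rw [vol_smul]
          refine mul_le_of_le_one_left' ?_
          rw [← ENNReal.ofReal_one]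
          apply ENNReal.ofReal_le_ofReal
          nlinarith [hh.1, hh.2]
        · rw [indicator_of_notMem hh]
          simp only [nonpos_iff_eq_zero]
          convert measure_empty (μ := (volume : Measure (Fin 2 → ℝ)))
          ext v
          simp only [mem_ofPred_eq, mem_empty_iff_false, iff_false]
          intro hv
          exact hh (abs_lt.1 (slice_sub hε hA hv).1)
    _ = _ := by
        rw [lintegral_indicator measurableSet_Ioo, lintegral_const]
        simp only [MeasurableSet.univ, Measure.restrict_apply, univ_inter, Real.volume_Ioo]
        rw [mul_comm]; norm_num

lemma le_cone {i : Fin 3} {ε : ℝ} (hε : |ε| = 1) {A : Set E3} (hA : A ⊆ pc i ε)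
    (hm : MeasurableSet A) : volume (gch i ε ⁻¹' A) ≤ 64 * volume (cone A) := by
  rw [volume_eq i (measurableSet_cone hm)]
  obtain ⟨J, hJm, hJ, hJε⟩ : ∃ J : Set ℝ, MeasurableSet J ∧ volume J = ENNReal.ofReal (1/4) ∧
      ∀ h ∈ J, 1/4 < ε * h ∧ ε * h < 1/2 := by
    rcases (abs_eq zero_le_one).1 hε with rfl | rfl
    · refine ⟨Ioo (1/4) (1/2), measurableSet_Ioo, by rw [Real.volume_Ioo]; norm_num, ?_⟩
      rintro h ⟨h1, h2⟩; constructor <;> linarith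
    · refine ⟨Ioo (-1/2) (-1/4), measurableSet_Ioo, by rw [Real.volume_Ioo]; norm_num, ?_⟩
      rintro h ⟨h1, h2⟩; constructor <;> linarith
  have key : ∫⁻ h : ℝ, J.indicator (fun _ => ENNReal.ofReal (1/16) * volume (gch i ε ⁻¹' A)) h ≤
      ∫⁻ h : ℝ, volume {v : Fin 2 → ℝ | io i h v ∈ cone A} := by
    apply lintegral_mono
    intro h
    by_cases hh : h ∈ J
    · rw [indicator_of_mem hh]
      obtain ⟨h1, h2⟩ := hJε h hh
      refine le_trans ?_ (measure_mono (s := |h| • (gch i ε ⁻¹' A)) fun v hv =>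
        sub_slice hε hA (by linarith) h2 hv)
      rw [vol_smul]
      gcongr
      have h3 : ε * ε = 1 := by rw [← abs_mul_abs_self, hε, one_mul]
      have : h ^ 2 = (ε * h) ^ 2 := by rw [mul_pow, sq ε, h3, one_mul]
      rw [this]; nlinarith
    · rw [indicator_of_notMem hh]; exact zero_le
  rw [lintegral_indicator hJm, lintegral_const] at key
  simp only [MeasurableSet.univ, Measure.restrict_apply, univ_inter, hJ] at key
  calc volume (gch i ε ⁻¹' A)
      = 64 * (ENNReal.ofReal (1/16) * volume (gch i ε ⁻¹' A) * ENNReal.ofReal (1/4)) := by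
        have : (64 : ℝ≥0∞) = ENNReal.ofReal 64 := by norm_num
        rw [mul_right_comm, ← mul_assoc, this, ← ENNReal.ofReal_mul (by norm_num),
          ← ENNReal.ofReal_mul (by norm_num)]
        norm_num
    _ ≤ _ := by gcongr

lemma measurableSet_pc (i : Fin 3) (ε : ℝ) : MeasurableSet (pc i ε) := by
  apply IsClosed.measurableSet
  have h1 : Continuous fun x : E3 => x i := by fun_prop
  exact (isClosed_eq continuous_norm continuous_const).inter
    (isClosed_le continuous_const (continuous_const.mul h1))

lemma sphere_cover {x : E3} (hx : x ∈ sphere (0 : E3) 1) :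
    ∃ p : Fin 3 × Bool, x ∈ pc p.1 (if p.2 then 1 else -1) := by
  have hx1 : ‖x‖ = 1 := by simpa using hx
  by_contra! hcon
  have h : ∀ i : Fin 3, (x i) ^ 2 < 1/4 := by
    intro i
    have h1 := hcon (i, true)
    have h2 := hcon (i, false)
    simp only [pc, hx1, mem_ofPred_eq, true_and, not_le] at h1 h2
    norm_num at h1 h2
    nlinarith
  have := EuclideanSpace.norm_sq_eq x
  rw [hx1, Fin.sum_univ_three] at this
  simp only [Real.norm_eq_abs, sq_abs] at this
  linarith [h 0, h 1, h 2]

lemma eps_abs (b : Bool) : |(if b then 1 else -1 : ℝ)| = 1 := by cases b <;> simp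

lemma cone_mono {A B : Set E3} (h : A ⊆ B) : cone A ⊆ cone B := fun _ hx => ⟨hx.1, hx.2.1, h hx.2.2⟩

lemma muH_le_cone {A : Set E3} (hm : MeasurableSet A) (hA : A ⊆ sphere (0 : E3) 1) :
    μH[2] A ≤ 6144 * volume (cone A) := by
  have h1 : A ⊆ ⋃ p : Fin 3 × Bool, A ∩ pc p.1 (if p.2 then 1 else -1) := by
    intro x hx
    obtain ⟨p, hp⟩ := sphere_cover (hA hx)
    exact mem_iUnion.2 ⟨p, hx, hp⟩
  calc μH[2] A ≤ ∑ p : Fin 3 × Bool, μH[2] (A ∩ pc p.1 (if p.2 then 1 else -1)) :=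
        (measure_mono h1).trans (measure_iUnion_fintype_le _ _)
    _ ≤ ∑ p : Fin 3 × Bool, 1024 * volume (cone A) := by
        apply Finset.sum_le_sum
        intro p _
        refine (chart_le (eps_abs p.2) inter_subset_right).1.trans ?_
        grw [le_cone (eps_abs p.2) inter_subset_right (hm.inter (measurableSet_pc _ _)),
          cone_mono inter_subset_left]
        rw [← mul_assoc]; norm_num
    _ = _ := by
        simp [← mul_assoc]; norm_num

lemma cone_le_muH {A : Set E3} (hm : MeasurableSet A) (hA : A ⊆ sphere (0 : E3) 1) :
    volume (cone A) ≤ 768 * μH[2] A := by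
  have h1 : cone A ⊆ ⋃ p : Fin 3 × Bool, cone (A ∩ pc p.1 (if p.2 then 1 else -1)) := by
    intro x hx
    obtain ⟨p, hp⟩ := sphere_cover (hA hx.2.2)
    exact mem_iUnion.2 ⟨p, hx.1, hx.2.1, hx.2.2, hp⟩
  calc volume (cone A) ≤ ∑ p : Fin 3 × Bool, volume (cone (A ∩ pc p.1 (if p.2 then 1 else -1))) :=
        (measure_mono h1).trans (measure_iUnion_fintype_le _ _)
    _ ≤ ∑ p : Fin 3 × Bool, 128 * μH[2] A := by
        apply Finset.sum_le_sum
        intro p _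
        refine (cone_le (eps_abs p.2) inter_subset_right (hm.inter (measurableSet_pc _ _))).trans ?_
        grw [(chart_le (eps_abs p.2) inter_subset_right).2, inter_subset_left (s := A)]
        rw [← mul_assoc]; norm_num
    _ = _ := by
        simp [← mul_assoc]; norm_num

/-- surface measure on unit sphere, as a measure on the ambient space -/
noncomputable def sg : Measure E3 := ((volume : Measure E3).toSphere).map Subtype.val

lemma sg_apply {A : Set E3} (hm : MeasurableSet A) :
    sg A = 3 * volume (cone (A ∩ sphere 0 1)) := by
  rw [sg, Measure.map_apply measurable_subtype_coe hm,
    Measure.toSphere_apply' _ (measurable_subtype_coe hm)]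
  congr 1
  · simp
  · congr 1
    ext y
    simp only [Subtype.image_preimage_coe]
    constructor
    · rintro ⟨r, ⟨hr0, hr1⟩, a, ⟨ha1, ha2⟩, rfl⟩
      have h1 : ‖a‖ = 1 := by simpa using ha1
      have h2 : ‖r • a‖ = r := by rw [norm_smul, h1, mul_one, Real.norm_eq_abs, abs_of_pos hr0]
      refine ⟨?_, ?_, ?_⟩ <;> simp only [] <;> rw [h2]
      · exact hr0
      · exact hr1
      · rw [smul_smul, inv_mul_cancel₀ hr0.ne', one_smul]; exact ⟨ha2, ha1⟩
    · rintro ⟨h1, h2, h3⟩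
      refine ⟨‖y‖, ⟨h1, h2⟩, ‖y‖⁻¹ • y, ⟨h3.2, h3.1⟩, ?_⟩
      simp only [smul_smul, mul_inv_cancel₀ h1.ne', one_smul]

lemma muH_le_sg : (μH[2] : Measure E3).restrict (sphere 0 1) ≤ (10000 : ℝ≥0∞) • sg := by
  rw [Measure.le_iff]
  intro A hA
  rw [Measure.restrict_apply hA, Measure.smul_apply, sg_apply hA, smul_eq_mul, ← mul_assoc]
  refine (muH_le_cone (hA.inter isClosed_sphere.measurableSet) inter_subset_right).trans ?_
  gcongr; norm_num

lemma sg_le_muH : sg ≤ (10000 : ℝ≥0∞) • (μH[2] : Measure E3).restrict (sphere 0 1) := by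
  rw [Measure.le_iff]
  intro A hA
  rw [Measure.smul_apply, Measure.restrict_apply hA, sg_apply hA, smul_eq_mul]
  grw [cone_le_muH (hA.inter isClosed_sphere.measurableSet) inter_subset_right]
  rw [← mul_assoc]
  gcongr; norm_num


lemma muH_sphere {R : ℝ} (hR : 0 < R) : (μH[2] : Measure E3).restrict (sphere 0 R) =
    ENNReal.ofReal (R ^ 2) • ((μH[2] : Measure E3).restrict (sphere 0 1)).map (fun x => R • x) := by
  ext A hA
  have hm : Measurable fun x : E3 => R • x := measurable_const_smul R
  rw [Measure.restrict_apply hA, Measure.smul_apply, Measure.map_apply hm hA,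
    Measure.restrict_apply (hm hA)]
  have e : A ∩ sphere 0 R = R • ((fun x : E3 => R • x) ⁻¹' A ∩ sphere 0 1) := by
    ext y
    rw [Set.mem_smul_set_iff_inv_smul_mem₀ hR.ne']
    simp only [mem_inter_iff, mem_preimage, smul_smul, mul_inv_cancel₀ hR.ne', one_smul,
      mem_sphere_iff_norm, sub_zero, norm_smul, norm_inv, Real.norm_eq_abs, abs_of_pos hR]
    rw [inv_mul_eq_one₀ hR.ne', eq_comm (a := R)]
  rw [e, Measure.hausdorffMeasure_smul₀ (by norm_num) hR.ne']
  simp only [ENNReal.smul_def, smul_eq_mul]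
  congr 1
  rw [ENNReal.ofReal]
  congr 1
  ext
  simp [sq_nonneg]

lemma lintegral_muH_sphere {R : ℝ} (hR : 0 ≤ R) {g : E3 → ℝ≥0∞} (hg : Measurable g) :
    ∫⁻ x in sphere (0 : E3) R, g x ∂μH[2] =
      ENNReal.ofReal (R ^ 2) * ∫⁻ x in sphere (0 : E3) 1, g (R • x) ∂μH[2] := by
  rcases hR.eq_or_lt with rfl | hR
  · have := nullSingletonClass_hausdorff E3 (d := 2) (by norm_num)
    simp
  · rw [muH_sphere hR, lintegral_smul_measure, lintegral_map hg (measurable_const_smul R)]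
    rfl

lemma polar {g : E3 → ℝ≥0∞} (hg : Measurable g) :
    ∫⁻ x, g x = ∫⁻ w, (∫⁻ r in Ioi (0 : ℝ), ENNReal.ofReal (r ^ 2) * g (r • w)) ∂sg := by
  have hm : Measurable fun p : E3 × ℝ => ENNReal.ofReal (p.2 ^ 2) * g (p.2 • p.1) := by fun_prop
  rw [sg, lintegral_map (hm.lintegral_prod_right') measurable_subtype_coe]
  have h1 := (volume : Measure E3).measurePreserving_homeomorphUnitSphereProd
  have h2 := h1.symm (homeomorphUnitSphereProd E3).toMeasurableEquiv
  have h3 : ∫⁻ x, g x = ∫⁻ x : ({(0 : E3)}ᶜ : Set E3), g x ∂(volume.comap Subtype.val) := by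
    rw [lintegral_subtype_comap (measurableSet_singleton _).compl, restrict_compl_singleton]
  have hg' : Measurable (fun x : ({(0 : E3)}ᶜ : Set E3) => g x) := hg.comp measurable_subtype_coe
  rw [h3, ← h2.lintegral_comp hg', lintegral_prod]
  · apply lintegral_congr
    intro w
    have hw : (w : E3) ≠ 0 := by
      have := w.2
      intro h; rw [h] at this; simp at this
    rw [Measure.volumeIoiPow, lintegral_withDensity_eq_lintegral_mul₀]
    · rw [← lintegral_subtype_comap measurableSet_Ioi]
      apply lintegral_congr
      intro r
      simp
    · apply Measurable.aemeasurable; fun_prop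
    · apply Measurable.aemeasurable
      exact (hg.comp measurable_subtype_coe).comp (h2.measurable.comp measurable_prodMk_left)
  · exact ((hg.comp measurable_subtype_coe).comp h2.measurable).aemeasurable

lemma polar_ann {g : E3 → ℝ≥0∞} (hg : Measurable g) {a b : ℝ} (ha : 0 ≤ a) :
    ∫⁻ x in {x : E3 | a ≤ ‖x‖ ∧ ‖x‖ ≤ b}, g x =
      ∫⁻ w, (∫⁻ r in Icc a b, ENNReal.ofReal (r ^ 2) * g (r • w)) ∂sg := by
  have hS : MeasurableSet {x : E3 | a ≤ ‖x‖ ∧ ‖x‖ ≤ b} :=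
    (measurableSet_le measurable_const measurable_norm).inter
      (measurableSet_le measurable_norm measurable_const)
  rw [← lintegral_indicator hS, polar (hg.indicator hS)]
  have hm : Measurable fun p : E3 × ℝ => ENNReal.ofReal (p.2 ^ 2) * g (p.2 • p.1) := by fun_prop
  have hm' : Measurable fun p : E3 × ℝ => ENNReal.ofReal (p.2 ^ 2) *
      ({x : E3 | a ≤ ‖x‖ ∧ ‖x‖ ≤ b}.indicator g) (p.2 • p.1) := by
    have := hg.indicator hS
    fun_prop
  rw [sg, lintegral_map (hm.lintegral_prod_right') measurable_subtype_coe,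
    lintegral_map (hm'.lintegral_prod_right') measurable_subtype_coe]
  apply lintegral_congr
  intro w
  have hw : ‖(w : E3)‖ = 1 := by simp
  have e : ∫⁻ r in Icc a b, ENNReal.ofReal (r ^ 2) * g (r • (w : E3)) =
      ∫⁻ r in Ioi (0:ℝ), (Icc a b).indicator (fun r => ENNReal.ofReal (r ^ 2) * g (r • (w : E3))) r := by
    rw [restrict_congr_set (Ioi_ae_eq_Ici (a := (0:ℝ))), lintegral_indicator measurableSet_Icc,
      Measure.restrict_restrict measurableSet_Icc]
    congr 2
    ext r
    simp only [mem_Icc, mem_inter_iff, mem_Ici]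
    constructor
    · exact fun h => ⟨h, ha.trans h.1⟩
    · exact fun h => h.1
  rw [e]
  apply setLIntegral_congr_fun measurableSet_Ioi
  intro r hr
  have hr' : ‖r • (w : E3)‖ = r := by rw [norm_smul, hw, mul_one, Real.norm_eq_abs, abs_of_pos hr]
  by_cases h : r ∈ Icc a b
  · have h' : r • (w : E3) ∈ {x : E3 | a ≤ ‖x‖ ∧ ‖x‖ ≤ b} := by
      change a ≤ ‖_‖ ∧ ‖_‖ ≤ b
      rw [hr']; exact h
    simp only []
    rw [indicator_of_mem h, indicator_of_mem h']
  · have h' : r • (w : E3) ∉ {x : E3 | a ≤ ‖x‖ ∧ ‖x‖ ≤ b} := by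
      change ¬ (a ≤ ‖_‖ ∧ ‖_‖ ≤ b)
      rw [hr']; exact h
    simp only []
    rw [indicator_of_notMem h, indicator_of_notMem h', mul_zero]


lemma oneD_gen {a b c : ℝ} (hab : a ≤ b) (hc : 0 < c) {N w p W W' f f' : ℝ → ℝ}
    (hN : ∀ r ∈ Icc a b, HasDerivAt N (c * w r) r)
    (hW : ∀ r ∈ Icc a b, HasDerivAt W (W' r) r)
    (hf : ∀ r ∈ Icc a b, HasDerivAt f (f' r) r)
    (hw : ContinuousOn w (Icc a b)) (hp : ContinuousOn p (Icc a b))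
    (hW' : ContinuousOn W' (Icc a b)) (hf' : ContinuousOn f' (Icc a b))
    (hN0 : ∀ r ∈ Icc a b, 0 ≤ N r) (hw0 : ∀ r ∈ Icc a b, 0 ≤ w r)
    (hp0 : ∀ r ∈ Icc a b, 0 ≤ p r)
    (hW0 : ∀ r ∈ Icc a b, 0 ≤ W r) (hW'0 : ∀ r ∈ Icc a b, 0 ≤ W' r)
    (hNwp : ∀ r ∈ Icc a b, N r ^ 2 = w r * p r) :
    N a * W a * f a ^ 2 + (c / 2) * ∫ r in Icc a b, w r * W r * f r ^ 2 ≤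
      N b * W b * f b ^ 2 + (2 / c) * ∫ r in Icc a b, p r * W r * f' r ^ 2 := by
  have cN : ContinuousOn N (Icc a b) := fun r hr => (hN r hr).continuousAt.continuousWithinAt
  have cW : ContinuousOn W (Icc a b) := fun r hr => (hW r hr).continuousAt.continuousWithinAt
  have cf : ContinuousOn f (Icc a b) := fun r hr => (hf r hr).continuousAt.continuousWithinAt
  have hu : uIcc a b = Icc a b := uIcc_of_le hab
  have hd : ∀ r ∈ uIcc a b, HasDerivAt (fun r => N r * W r * f r ^ 2)
      (((c * w r) * W r + N r * W' r) * f r ^ 2 + N r * W r * (2 * f r * f' r)) r := by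
    intro r hr
    rw [hu] at hr
    have := ((hN r hr).mul (hW r hr)).mul ((hf r hr).pow 2)
    exact this.congr_deriv (by simp)
  have hi : IntervalIntegrable (fun r => ((c * w r) * W r + N r * W' r) * f r ^ 2
      + N r * W r * (2 * f r * f' r)) volume a b := by
    apply ContinuousOn.intervalIntegrable
    rw [hu]; fun_prop
  have h1 := intervalIntegral.integral_eq_sub_of_hasDerivAt hd hi
  have i1 : IntervalIntegrable (fun r => w r * W r * f r ^ 2) volume a b := by
    apply ContinuousOn.intervalIntegrable
    rw [hu]; fun_prop
  have i2 : IntervalIntegrable (fun r => p r * W r * f' r ^ 2) volume a b := by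
    apply ContinuousOn.intervalIntegrable
    rw [hu]; fun_prop
  have h2 := intervalIntegral.integral_mono_on hab
    ((i1.const_mul (c/2)).sub (i2.const_mul (2/c))) hi (fun r hr => by
      have e1 := hN0 r hr
      have e2 := hw0 r hr
      have e3 := hp0 r hr
      have e4 := hW0 r hr
      have e5 := hW'0 r hr
      have e6 := hNwp r hr
      have k1 : 0 ≤ N r * W' r * f r ^ 2 := by positivity
      have k2 : 0 ≤ c / 2 * w r * f r ^ 2 + 2 * N r * f r * f' r + 2 / c * p r * f' r ^ 2 := by
        rcases e2.eq_or_lt with h0 | h0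
        · have : N r = 0 := by
            rw [← h0, zero_mul] at e6; exact pow_eq_zero_iff (two_ne_zero) |>.1 e6
          rw [this, ← h0]; simp; positivity
        · have : c / 2 * w r * f r ^ 2 + 2 * N r * f r * f' r + 2 / c * p r * f' r ^ 2 =
            (c * w r * f r + 2 * N r * f' r) ^ 2 / (2 * c * w r) := by
            have hp' : p r = N r ^ 2 / w r := by rw [e6]; field_simp
            rw [hp']; field_simp; ring
          rw [this]; positivity
      have k3 := mul_nonneg e4 k2
      nlinarith)
  rw [h1, intervalIntegral.integral_sub (i1.const_mul _) (i2.const_mul _),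
    intervalIntegral.integral_const_mul, intervalIntegral.integral_const_mul,
    intervalIntegral.integral_of_le hab, intervalIntegral.integral_of_le hab,
    ← integral_Icc_eq_integral_Ioc, ← integral_Icc_eq_integral_Ioc] at h2
  linarith

/-- the volume weight -/
noncomputable def Ww (α t r : ℝ) : ℝ := r ^ 2 * (1 + t + r) ^ (-α)

lemma Ww_deriv {α t r : ℝ} (ht : 0 ≤ t) (hr : 0 ≤ r) :
    HasDerivAt (Ww α t) (2 * r * (1 + t + r) ^ (-α) + r ^ 2 * (-α * (1 + t + r) ^ (-α - 1))) r := by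
  have h1 : HasDerivAt (fun r => 1 + t + r) 1 r := (hasDerivAt_id r).const_add (1 + t)
  have h2 := h1.rpow_const (p := -α) (Or.inl (by positivity))
  have h3 := (hasDerivAt_pow 2 r).mul h2
  exact h3.congr_deriv (by simp)

lemma Ww_deriv_nonneg {α t r : ℝ} (ha : α ≤ 2) (ht : 0 ≤ t) (hr : 0 ≤ r) :
    0 ≤ 2 * r * (1 + t + r) ^ (-α) + r ^ 2 * (-α * (1 + t + r) ^ (-α - 1)) := by
  have hp : 0 < 1 + t + r := by positivity
  rw [Real.rpow_sub_one hp.ne']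
  have : 2 * r * (1 + t + r) ^ (-α) + r ^ 2 * (-α * ((1 + t + r) ^ (-α) / (1 + t + r))) =
    (1 + t + r) ^ (-α) / (1 + t + r) * (r * (2 * (1 + t) + (2 - α) * r)) := by field_simp; ring
  rw [this]
  have : 0 ≤ 2 - α := by linarith
  positivity

lemma oneD_left {μ₁ μ₂ α t a b : ℝ} (hμ : -1 < μ₁) (hα : α ≤ 2) (ht : 0 ≤ t) (ha : 0 ≤ a)
    (hab : a ≤ b) (hb : b ≤ t) {f f' : ℝ → ℝ} (hf : ∀ r, HasDerivAt f (f' r) r)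
    (hf' : Continuous f') :
    nwt μ₁ μ₂ (a - t) * Ww α t a * f a ^ 2
      + ((1 + μ₁) / 2) * ∫ r in Icc a b, (1 + |r - t|) ^ (-2 - μ₁) * Ww α t r * f r ^ 2 ≤
    nwt μ₁ μ₂ (b - t) * Ww α t b * f b ^ 2
      + (2 / (1 + μ₁)) * ∫ r in Icc a b, (1 + |r - t|) ^ (-μ₁) * Ww α t r * f' r ^ 2 := by
  have hn : ∀ r, r ≤ t → nwt μ₁ μ₂ (r - t) = (1 + (t - r)) ^ (-1 - μ₁) := by
    intro r hr
    rw [nwt]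
    split_ifs with h
    · have : r = t := by linarith
      subst this; simp
    · rw [abs_of_nonpos (by linarith), neg_sub]
  have habs : ∀ r ∈ Icc a b, |r - t| = t - r := fun r hr => by
    rw [abs_of_nonpos (by linarith [hr.2]), neg_sub]
  have c1 : ∀ e : ℝ, ContinuousOn (fun r => (1 + |r - t|) ^ e) (Icc a b) := by
    intro e
    apply ContinuousOn.rpow_const
    · fun_prop
    · intro r _; left; positivity
  rw [hn a (hab.trans hb), hn b hb]
  refine oneD_gen (N := fun r => (1 + (t - r)) ^ (-1 - μ₁)) (W := Ww α t) hab (by linarith) ?_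
    (fun r hr => Ww_deriv ht (ha.trans hr.1)) (fun r _ => hf r) (c1 _) (c1 _) ?_ hf'.continuousOn
    ?_ ?_ ?_ ?_ (fun r hr => Ww_deriv_nonneg hα ht (ha.trans hr.1)) ?_
  · intro r hr
    have hp : 0 < 1 + (t - r) := by linarith [hr.2]
    have h1 : HasDerivAt (fun r => 1 + (t - r)) (-1) r := ((hasDerivAt_id r).const_sub t).const_add 1
    have h2 := h1.rpow_const (p := -1 - μ₁) (Or.inl hp.ne')
    convert h2 using 1
    rw [habs r hr, show -1 - μ₁ - 1 = -2 - μ₁ by ring]; ring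
  · have : ∀ e : ℝ, ContinuousOn (fun r => (1 + t + r) ^ e) (Icc a b) := by
      intro e
      apply ContinuousOn.rpow_const
      · fun_prop
      · intro r hr; left; have := ha.trans hr.1; positivity
    have h1 := this (-α)
    have h2 := this (-α - 1)
    fun_prop
  · intro r hr
    have : 0 ≤ t - r := by linarith [hr.2]
    positivity
  · intro r _; positivity
  · intro r _; positivity
  · intro r hr
    have := ha.trans hr.1
    unfold Ww; positivity
  · intro r hr
    have hp : 0 < 1 + (t - r) := by linarith [hr.2]
    rw [habs r hr, ← Real.rpow_add hp, ← Real.rpow_natCast, ← Real.rpow_mul hp.le]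
    congr 1; push_cast; ring

lemma oneD_right {μ₁ μ₂ α t a b : ℝ} (hμ : 0 < μ₂) (hα : α ≤ 2) (ht : 0 ≤ t) (ha : t ≤ a)
    (hab : a ≤ b) {f f' : ℝ → ℝ} (hf : ∀ r, HasDerivAt f (f' r) r)
    (hf' : Continuous f') :
    nwt μ₁ μ₂ (a - t) * Ww α t a * f a ^ 2
      + (μ₂ / 2) * ∫ r in Icc a b, (1 + |r - t|) ^ (μ₂ - 1) * Ww α t r * f r ^ 2 ≤
    nwt μ₁ μ₂ (b - t) * Ww α t b * f b ^ 2
      + (2 / μ₂) * ∫ r in Icc a b, (1 + |r - t|) ^ (1 + μ₂) * Ww α t r * f' r ^ 2 := by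
  have hn : ∀ r, t ≤ r → nwt μ₁ μ₂ (r - t) = (1 + (r - t)) ^ μ₂ := by
    intro r hr
    rw [nwt, if_pos (by linarith), abs_of_nonneg (by linarith)]
  have habs : ∀ r ∈ Icc a b, |r - t| = r - t := fun r hr => by
    rw [abs_of_nonneg (by linarith [hr.1])]
  have c1 : ∀ e : ℝ, ContinuousOn (fun r => (1 + |r - t|) ^ e) (Icc a b) := by
    intro e
    apply ContinuousOn.rpow_const
    · fun_prop
    · intro r _; left; positivity
  have h0 : ∀ r ∈ Icc a b, 0 ≤ r := fun r hr => by linarith [hr.1]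
  rw [hn a ha, hn b (ha.trans hab)]
  refine oneD_gen (N := fun r => (1 + (r - t)) ^ μ₂) (W := Ww α t) hab hμ ?_
    (fun r hr => Ww_deriv ht (h0 r hr)) (fun r _ => hf r) (c1 _) (c1 _) ?_ hf'.continuousOn
    ?_ ?_ ?_ ?_ (fun r hr => Ww_deriv_nonneg hα ht (h0 r hr)) ?_
  · intro r hr
    have hp : 0 < 1 + (r - t) := by linarith [hr.1]
    have h1 : HasDerivAt (fun r => 1 + (r - t)) 1 r := ((hasDerivAt_id r).sub_const t).const_add 1
    have h2 := h1.rpow_const (p := μ₂) (Or.inl hp.ne')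
    convert h2 using 1
    rw [habs r hr]; ring
  · have : ∀ e : ℝ, ContinuousOn (fun r => (1 + t + r) ^ e) (Icc a b) := by
      intro e
      apply ContinuousOn.rpow_const
      · fun_prop
      · intro r hr; left; have := h0 r hr; positivity
    have h1 := this (-α)
    have h2 := this (-α - 1)
    fun_prop
  · intro r hr
    have : 0 ≤ r - t := by linarith [hr.1]
    positivity
  · intro r _; positivity
  · intro r _; positivity
  · intro r hr
    have := h0 r hr
    unfold Ww; positivity
  · intro r hr
    have hp : 0 < 1 + (r - t) := by linarith [hr.1]
    rw [habs r hr, ← Real.rpow_add hp, ← Real.rpow_natCast, ← Real.rpow_mul hp.le]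
    congr 1; push_cast; ring


lemma ofReal_int {a b : ℝ} {h : ℝ → ℝ} (hc : ContinuousOn h (Icc a b))
    (h0 : ∀ r ∈ Icc a b, 0 ≤ h r) :
    ENNReal.ofReal (∫ r in Icc a b, h r) = ∫⁻ r in Icc a b, ENNReal.ofReal (h r) := by
  apply ofReal_integral_eq_lintegral_ofReal hc.integrableOn_Icc
  filter_upwards [ae_restrict_mem measurableSet_Icc] with r hr using h0 r hr

lemma nwt_nonneg (μ₁ μ₂ q : ℝ) : 0 ≤ nwt μ₁ μ₂ q := by
  unfold nwt; split_ifs <;> positivity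

lemma Ww_nonneg {α t r : ℝ} (ht : 0 ≤ t) (hr : 0 ≤ r) : 0 ≤ Ww α t r := by
  unfold Ww; positivity

lemma bulk_cont {e α t a b : ℝ} (ht : 0 ≤ t) (ha : 0 ≤ a) {v : ℝ → ℝ} (hv : Continuous v) :
    ContinuousOn (fun r => (1 + |r - t|) ^ e * Ww α t r * v r ^ 2) (Icc a b) := by
  have c1 : ContinuousOn (fun r => (1 + |r - t|) ^ e) (Icc a b) := by
    apply ContinuousOn.rpow_const
    · fun_prop
    · intro r _; left; positivity
  have c2 : ContinuousOn (fun r => Ww α t r) (Icc a b) := fun r hr =>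
    (Ww_deriv ht (ha.trans hr.1)).continuousAt.continuousWithinAt
  fun_prop

lemma bulk_nonneg {e α t a b : ℝ} (ht : 0 ≤ t) (ha : 0 ≤ a) {v : ℝ → ℝ} :
    ∀ r ∈ Icc a b, 0 ≤ (1 + |r - t|) ^ e * Ww α t r * v r ^ 2 := by
  intro r hr
  have := Ww_nonneg (α := α) ht (ha.trans hr.1)
  positivity

lemma oneD_enn {μ₁ μ₂ : ℝ} (hμ₁ : -1 < μ₁) (hμ₂ : 0 < μ₂) :
    ∃ C : ℝ, 1 ≤ C ∧ ∀ α : ℝ, α ≤ 2 → ∀ t : ℝ, 0 ≤ t → ∀ R₁ R₂ : ℝ, 0 ≤ R₁ → R₁ ≤ R₂ →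
      ∀ f f' : ℝ → ℝ, (∀ r, HasDerivAt f (f' r) r) → Continuous f' →
      ENNReal.ofReal (nwt μ₁ μ₂ (R₁ - t) * Ww α t R₁ * f R₁ ^ 2)
        + (∫⁻ r in Icc (min R₁ t) (min R₂ t),
            ENNReal.ofReal ((1 + |r - t|) ^ (-2 - μ₁) * Ww α t r * f r ^ 2))
        + (∫⁻ r in Icc (max R₁ t) (max R₂ t),
            ENNReal.ofReal ((1 + |r - t|) ^ (μ₂ - 1) * Ww α t r * f r ^ 2)) ≤
      ENNReal.ofReal C * (ENNReal.ofReal (nwt μ₁ μ₂ (R₂ - t) * Ww α t R₂ * f R₂ ^ 2)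
        + (∫⁻ r in Icc (min R₁ t) (min R₂ t),
            ENNReal.ofReal ((1 + |r - t|) ^ (-μ₁) * Ww α t r * f' r ^ 2))
        + (∫⁻ r in Icc (max R₁ t) (max R₂ t),
            ENNReal.ofReal ((1 + |r - t|) ^ (1 + μ₂) * Ww α t r * f' r ^ 2))) := by
  set c := 1 + μ₁ with hc
  have hc0 : 0 < c := by linarith
  set κ := min 1 (min (c / 2) (μ₂ / 2)) with hκ
  set K := max 1 (max (2 / c) (2 / μ₂)) with hK
  have hκ0 : 0 < κ := by rw [hκ]; positivity
  have k1 : κ ≤ 1 := min_le_left _ _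
  have k2 : κ ≤ c / 2 := (min_le_right _ _).trans (min_le_left _ _)
  have k3 : κ ≤ μ₂ / 2 := (min_le_right _ _).trans (min_le_right _ _)
  have K1 : 1 ≤ K := le_max_left _ _
  have K2 : 2 / c ≤ K := (le_max_left _ _).trans (le_max_right _ _)
  have K3 : 2 / μ₂ ≤ K := (le_max_right _ _).trans (le_max_right _ _)
  refine ⟨K / κ, (one_le_div hκ0).2 (k1.trans K1), ?_⟩
  intro α hα t ht R₁ R₂ hR₁ hR f f' hf hf'
  have cf : Continuous f := continuous_iff_continuousAt.2 fun r => (hf r).continuousAt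
  have ha1 : 0 ≤ min R₁ t := le_min hR₁ ht
  have ha2 : 0 ≤ max R₁ t := hR₁.trans (le_max_left _ _)
  have hR₂ : 0 ≤ R₂ := hR₁.trans hR
  have h1 := oneD_left (μ₂ := μ₂) hμ₁ hα ht ha1 (min_le_min_right t hR) (min_le_right R₂ t) hf hf'
  have h2 := oneD_right (μ₁ := μ₁) hμ₂ hα ht (le_max_right R₁ t) (max_le_max_right t hR) hf hf'
  rw [← ofReal_int (bulk_cont ht ha1 cf) (bulk_nonneg ht ha1),
    ← ofReal_int (bulk_cont ht ha2 cf) (bulk_nonneg ht ha2),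
    ← ofReal_int (bulk_cont ht ha1 hf') (bulk_nonneg ht ha1),
    ← ofReal_int (bulk_cont ht ha2 hf') (bulk_nonneg ht ha2)]
  have p1 : 0 ≤ ∫ r in Icc (min R₁ t) (min R₂ t), (1 + |r - t|) ^ (-2 - μ₁) * Ww α t r * f r ^ 2 :=
    setIntegral_nonneg measurableSet_Icc (bulk_nonneg ht ha1)
  have p2 : 0 ≤ ∫ r in Icc (max R₁ t) (max R₂ t), (1 + |r - t|) ^ (μ₂ - 1) * Ww α t r * f r ^ 2 :=
    setIntegral_nonneg measurableSet_Icc (bulk_nonneg ht ha2)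
  have p3 : 0 ≤ ∫ r in Icc (min R₁ t) (min R₂ t), (1 + |r - t|) ^ (-μ₁) * Ww α t r * f' r ^ 2 :=
    setIntegral_nonneg measurableSet_Icc (bulk_nonneg ht ha1)
  have p4 : 0 ≤ ∫ r in Icc (max R₁ t) (max R₂ t), (1 + |r - t|) ^ (1 + μ₂) * Ww α t r * f' r ^ 2 :=
    setIntegral_nonneg measurableSet_Icc (bulk_nonneg ht ha2)
  set I1 := ∫ r in Icc (min R₁ t) (min R₂ t), (1 + |r - t|) ^ (-2 - μ₁) * Ww α t r * f r ^ 2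
  set I2 := ∫ r in Icc (max R₁ t) (max R₂ t), (1 + |r - t|) ^ (μ₂ - 1) * Ww α t r * f r ^ 2
  set J1 := ∫ r in Icc (min R₁ t) (min R₂ t), (1 + |r - t|) ^ (-μ₁) * Ww α t r * f' r ^ 2
  set J2 := ∫ r in Icc (max R₁ t) (max R₂ t), (1 + |r - t|) ^ (1 + μ₂) * Ww α t r * f' r ^ 2
  set B : ℝ → ℝ := fun r => nwt μ₁ μ₂ (r - t) * Ww α t r * f r ^ 2 with hB
  have hBn : ∀ r, 0 ≤ r → 0 ≤ B r := fun r hr =>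
    mul_nonneg (mul_nonneg (nwt_nonneg _ _ _) (Ww_nonneg ht hr)) (sq_nonneg _)
  have hBmm : ∀ R, B (min R t) + B (max R t) = B R + B t := by
    intro R
    rcases le_total R t with h | h
    · rw [min_eq_left h, max_eq_right h]
    · rw [min_eq_right h, max_eq_left h, add_comm]
  change B (min R₁ t) + c / 2 * I1 ≤ B (min R₂ t) + 2 / c * J1 at h1
  change B (max R₁ t) + μ₂ / 2 * I2 ≤ B (max R₂ t) + 2 / μ₂ * J2 at h2
  change ENNReal.ofReal (B R₁) + _ + _ ≤ _ * (ENNReal.ofReal (B R₂) + _ + _)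
  have b1 := hBn R₁ hR₁
  have b2 := hBn R₂ hR₂
  rw [← ENNReal.ofReal_add b1 p1, ← ENNReal.ofReal_add (add_nonneg b1 p1) p2,
    ← ENNReal.ofReal_add b2 p3, ← ENNReal.ofReal_add (add_nonneg b2 p3) p4,
    ← ENNReal.ofReal_mul (by positivity)]
  apply ENNReal.ofReal_le_ofReal
  rw [div_mul_eq_mul_div, le_div_iff₀ hκ0]
  have e1 := hBmm R₁
  have e2 := hBmm R₂
  have q1 := mul_le_mul_of_nonneg_right k1 b1
  have q2 := mul_le_mul_of_nonneg_right k2 p1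
  have q3 := mul_le_mul_of_nonneg_right k3 p2
  have q4 := mul_le_mul_of_nonneg_right K1 b2
  have q5 := mul_le_mul_of_nonneg_right K2 p3
  have q6 := mul_le_mul_of_nonneg_right K3 p4
  linarith

lemma sg_ae : ∀ᵐ w ∂sg, ‖w‖ = 1 := by
  rw [sg, ae_map_iff measurable_subtype_coe.aemeasurable (measurableSet_eq_fun measurable_norm measurable_const)]
  exact Filter.Eventually.of_forall fun w => by simp

/-- bulk integrand -/
noncomputable def bk (e α t : ℝ) (u : E3 → ℝ) (x : E3) : ℝ :=
  u x ^ 2 * (1 + |‖x‖ - t|) ^ e * (1 + t + ‖x‖) ^ (-α)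

lemma bk_nonneg {e α t : ℝ} (ht : 0 ≤ t) (u : E3 → ℝ) (x : E3) : 0 ≤ bk e α t u x := by
  unfold bk; positivity

lemma bk_meas {e α t : ℝ} {u : E3 → ℝ} (hu : Measurable u) : Measurable (bk e α t u) := by
  unfold bk; fun_prop

lemma bk_cont {e α t : ℝ} (ht : 0 ≤ t) {u : E3 → ℝ} (hu : Continuous u) :
    Continuous (bk e α t u) := by
  have c1 : Continuous (fun x : E3 => (1 + |‖x‖ - t|) ^ e) := by
    apply Continuous.rpow_const
    · fun_prop
    · intro r; left; positivity
  have c2 : Continuous (fun x : E3 => (1 + t + ‖x‖) ^ (-α)) := by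
    apply Continuous.rpow_const
    · fun_prop
    · intro r; left; positivity
  unfold bk; fun_prop

lemma bk_polar {e α t a b : ℝ} (ha : 0 ≤ a) {u : E3 → ℝ} (hu : Measurable u)
    {v : E3 → ℝ → ℝ} (huv : ∀ w r, ‖w‖ = 1 → 0 < r → u (r • w) = v w r) :
    ∫⁻ x in {x : E3 | a ≤ ‖x‖ ∧ ‖x‖ ≤ b}, ENNReal.ofReal (bk e α t u x) =
      ∫⁻ w, (∫⁻ r in Icc a b, ENNReal.ofReal ((1 + |r - t|) ^ e * Ww α t r * v w r ^ 2)) ∂sg := by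
  rw [polar_ann (bk_meas hu).ennreal_ofReal ha]
  apply lintegral_congr_ae
  filter_upwards [sg_ae] with w hw
  apply setLIntegral_congr_fun measurableSet_Icc
  intro r hr
  have hr0 : 0 ≤ r := ha.trans hr.1
  have hn : ‖r • w‖ = r := by rw [norm_smul, hw, mul_one, Real.norm_eq_abs, abs_of_nonneg hr0]
  simp only [bk, hn]
  rw [← ENNReal.ofReal_mul (sq_nonneg r)]
  congr 1
  rcases hr0.eq_or_lt with rfl | hr1
  · simp [Ww]
  · rw [huv w r hw hr1, Ww]; ring

/-- boundary term -/
noncomputable def bd (μ₁ μ₂ α t R : ℝ) (ξ : E3 → ℝ) (x : E3) : ℝ :=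
  nwt μ₁ μ₂ (R - t) * ξ x ^ 2 * (1 + t + R) ^ (-α)

lemma bd_eq {μ₁ μ₂ α t R : ℝ} (hR : 0 ≤ R) {ξ : E3 → ℝ} (hξ : Continuous ξ) :
    ∫⁻ x in sphere (0 : E3) R, ENNReal.ofReal (bd μ₁ μ₂ α t R ξ x) ∂μH[2] =
    ∫⁻ w in sphere (0 : E3) 1,
      ENNReal.ofReal (nwt μ₁ μ₂ (R - t) * Ww α t R * ξ (R • w) ^ 2) ∂μH[2] := by
  have hm : Measurable fun x => ENNReal.ofReal (bd μ₁ μ₂ α t R ξ x) := by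
    unfold bd; have := hξ.measurable; fun_prop
  rw [lintegral_muH_sphere hR hm, ← lintegral_const_mul]
  · apply lintegral_congr
    intro w
    rw [← ENNReal.ofReal_mul (sq_nonneg R)]
    congr 1
    simp only [bd, Ww]; ring
  · exact hm.comp (measurable_const_smul R)

lemma muH_sphere_ne_top : μH[2] (sphere (0 : E3) 1) ≠ ∞ := by
  have h := muH_le_sg univ
  rw [Measure.restrict_apply_univ] at h
  refine ne_top_of_le_ne_top ?_ h
  rw [Measure.smul_apply, smul_eq_mul]
  refine ENNReal.mul_ne_top (by simp) ?_
  rw [sg, Measure.map_apply measurable_subtype_coe MeasurableSet.univ]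
  exact measure_ne_top _ _

lemma radial_meas {ξ : E3 → ℝ} (hξ : ContDiff ℝ 1 ξ) : Measurable (radialDeriv ξ) := by
  have h1 : Continuous (fderiv ℝ ξ) := hξ.continuous_fderiv one_ne_zero
  have h2 : Measurable fun x : E3 => fderiv ℝ ξ x x := (h1.clm_apply continuous_id).measurable
  have : radialDeriv ξ = fun x => ‖x‖⁻¹ * fderiv ℝ ξ x x := by
    ext x; simp [radialDeriv]
  rw [this]; fun_prop

lemma radial_le (ξ : E3 → ℝ) (x : E3) : radialDeriv ξ x ^ 2 ≤ ‖fderiv ℝ ξ x‖ ^ 2 := by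
  rw [sq_le_sq, abs_of_nonneg (norm_nonneg (fderiv ℝ ξ x))]
  have h := (fderiv ℝ ξ x).le_opNorm (‖x‖⁻¹ • x)
  have h1 : ‖‖x‖⁻¹ • x‖ ≤ 1 := by
    rw [norm_smul, norm_inv, norm_norm]
    exact inv_mul_le_one
  calc _ ≤ _ := h
    _ ≤ ‖fderiv ℝ ξ x‖ * 1 := by gcongr
    _ = _ := mul_one _

lemma bk_fin {e α t b : ℝ} (ht : 0 ≤ t) {ξ : E3 → ℝ} (hξ : ContDiff ℝ 1 ξ) {S : Set E3}
    (hS : S ⊆ closedBall 0 b) :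
    ∫⁻ x in S, ENNReal.ofReal (bk e α t (radialDeriv ξ) x) ≠ ∞ := by
  have h1 : Continuous (fun x => ‖fderiv ℝ ξ x‖) := (hξ.continuous_fderiv one_ne_zero).norm
  refine ne_top_of_le_ne_top (b := ∫⁻ x in closedBall (0 : E3) b,
    ENNReal.ofReal (bk e α t (fun x => ‖fderiv ℝ ξ x‖) x)) ?_ ?_
  · have := setLIntegral_lt_top_of_isCompact (μ := (volume : Measure E3))
      (s := closedBall (0 : E3) b) measure_closedBall_lt_top.ne (isCompact_closedBall _ _)
      (f := fun x => (bk e α t (fun x => ‖fderiv ℝ ξ x‖) x).toNNReal)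
      (continuous_real_toNNReal.comp (bk_cont ht h1))
    exact this.ne
  · refine (lintegral_mono_set hS).trans (lintegral_mono fun x => ENNReal.ofReal_le_ofReal ?_)
    unfold bk
    have := radial_le ξ x
    gcongr

lemma bd_fin {μ₁ μ₂ α t R : ℝ} (hR : 0 ≤ R) {ξ : E3 → ℝ} (hξ : Continuous ξ) :
    ∫⁻ x in sphere (0 : E3) R, ENNReal.ofReal (bd μ₁ μ₂ α t R ξ x) ∂μH[2] ≠ ∞ := by
  rw [bd_eq hR hξ]
  have := setLIntegral_lt_top_of_isCompact (μ := (μH[2] : Measure E3))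
      (s := sphere (0 : E3) 1) muH_sphere_ne_top (isCompact_sphere _ _)
      (f := fun w => (nwt μ₁ μ₂ (R - t) * Ww α t R * ξ (R • w) ^ 2).toNNReal)
      (continuous_real_toNNReal.comp (by fun_prop))
  exact this.ne


lemma radial_ray (ξ : E3 → ℝ) (w : E3) (r : ℝ) (hw : ‖w‖ = 1) (hr : 0 < r) :
    radialDeriv ξ (r • w) = fderiv ℝ ξ (r • w) w := by
  rw [radialDeriv, norm_smul, hw, mul_one, Real.norm_eq_abs, abs_of_pos hr, smul_smul,
    inv_mul_cancel₀ hr.ne', one_smul]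

/-- annulus -/
def ann (a b : ℝ) : Set E3 := {x | a ≤ ‖x‖ ∧ ‖x‖ ≤ b}

lemma ray_meas {e α t a b : ℝ} {v : E3 × ℝ → ℝ} (hv : Continuous v) :
    Measurable fun w : E3 => ∫⁻ r in Icc a b,
      ENNReal.ofReal ((1 + |r - t|) ^ e * Ww α t r * v (w, r) ^ 2) := by
  have hm : Measurable fun p : E3 × ℝ =>
      ENNReal.ofReal ((1 + |p.2 - t|) ^ e * Ww α t p.2 * v p ^ 2) := by
    have := hv.measurable
    unfold Ww
    fun_prop
  exact hm.lintegral_prod_right'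

lemma main_enn {μ₁ μ₂ : ℝ} (hμ₁ : -1 < μ₁) (hμ₂ : 0 < μ₂) :
    ∃ C : ℝ, 0 < C ∧ ∀ α : ℝ, α ≤ 2 → ∀ t : ℝ, 0 ≤ t → ∀ R₁ R₂ : ℝ, 0 ≤ R₁ → R₁ ≤ R₂ →
      ∀ ξ : E3 → ℝ, ContDiff ℝ 1 ξ →
      (∫⁻ x in sphere (0 : E3) R₁, ENNReal.ofReal (bd μ₁ μ₂ α t R₁ ξ x) ∂μH[2])
        + (∫⁻ x in ann (min R₁ t) (min R₂ t), ENNReal.ofReal (bk (-2 - μ₁) α t ξ x))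
        + (∫⁻ x in ann (max R₁ t) (max R₂ t), ENNReal.ofReal (bk (μ₂ - 1) α t ξ x)) ≤
      ENNReal.ofReal C *
       ((∫⁻ x in sphere (0 : E3) R₂, ENNReal.ofReal (bd μ₁ μ₂ α t R₂ ξ x) ∂μH[2])
        + (∫⁻ x in ann (min R₁ t) (min R₂ t), ENNReal.ofReal (bk (-μ₁) α t (radialDeriv ξ) x))
        + (∫⁻ x in ann (max R₁ t) (max R₂ t),
            ENNReal.ofReal (bk (1 + μ₂) α t (radialDeriv ξ) x))) := by
  obtain ⟨C, hC, H⟩ := oneD_enn hμ₁ hμ₂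
  refine ⟨10000 * C * 10000, by positivity, ?_⟩
  intro α hα t ht R₁ R₂ hR₁ hR ξ hξ
  have cξ := hξ.continuous
  have cd := hξ.continuous_fderiv one_ne_zero
  have ha1 : 0 ≤ min R₁ t := le_min hR₁ ht
  have ha2 : 0 ≤ max R₁ t := hR₁.trans (le_max_left _ _)
  have hξr : ∀ (w : E3) (r : ℝ), ‖w‖ = 1 → 0 < r → ξ (r • w) = (fun w r => ξ (r • w)) w r :=
    fun _ _ _ _ => rfl
  have hdr : ∀ (w : E3) (r : ℝ), ‖w‖ = 1 → 0 < r →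
      radialDeriv ξ (r • w) = (fun w r => fderiv ℝ ξ (r • w) w) w r := radial_ray ξ
  unfold ann
  rw [bk_polar ha1 cξ.measurable hξr, bk_polar ha2 cξ.measurable hξr,
    bk_polar ha1 (radial_meas hξ) hdr, bk_polar ha2 (radial_meas hξ) hdr,
    bd_eq hR₁ cξ, bd_eq (hR₁.trans hR) cξ]
  have c1 : Continuous fun p : E3 × ℝ => ξ (p.2 • p.1) := by fun_prop
  have c2 : Continuous fun p : E3 × ℝ => fderiv ℝ ξ (p.2 • p.1) p.1 :=
    (cd.comp (by fun_prop : Continuous fun p : E3 × ℝ => p.2 • p.1)).clm_apply continuous_fst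
  have mB : ∀ R, Measurable fun w : E3 =>
      ENNReal.ofReal (nwt μ₁ μ₂ (R - t) * Ww α t R * ξ (R • w) ^ 2) := by
    intro R
    apply Measurable.ennreal_ofReal
    apply Continuous.measurable
    fun_prop
  have mI1 := ray_meas (e := -2 - μ₁) (α := α) (t := t) (a := min R₁ t) (b := min R₂ t) c1
  have mI2 := ray_meas (e := μ₂ - 1) (α := α) (t := t) (a := max R₁ t) (b := max R₂ t) c1
  have mJ1 := ray_meas (e := -μ₁) (α := α) (t := t) (a := min R₁ t) (b := min R₂ t) c2
  have mJ2 := ray_meas (e := 1 + μ₂) (α := α) (t := t) (a := max R₁ t) (b := max R₂ t) c2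
  have key := lintegral_mono (μ := sg) fun w => H α hα t ht R₁ R₂ hR₁ hR (fun r => ξ (r • w))
    (fun r => fderiv ℝ ξ (r • w) w) (fun r => by
      have h1 : HasDerivAt (fun r : ℝ => r • w) w r := by
        simpa using (hasDerivAt_id r).smul_const w
      have h2 := (hξ.differentiable one_ne_zero (r • w)).hasFDerivAt
      exact h2.comp_hasDerivAt r h1)
    (c2.comp (by fun_prop : Continuous fun r : ℝ => (w, r)))
  dsimp only at mI1 mI2 mJ1 mJ2
  rw [lintegral_add_right _ mI2, lintegral_add_right _ mI1,
    lintegral_const_mul' _ _ ENNReal.ofReal_ne_top, lintegral_add_right _ mJ2,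
    lintegral_add_right _ mJ1] at key
  have b1 : ∫⁻ w in sphere (0 : E3) 1,
      ENNReal.ofReal (nwt μ₁ μ₂ (R₁ - t) * Ww α t R₁ * ξ (R₁ • w) ^ 2) ∂μH[2] ≤
      10000 * ∫⁻ w, ENNReal.ofReal (nwt μ₁ μ₂ (R₁ - t) * Ww α t R₁ * ξ (R₁ • w) ^ 2) ∂sg := by
    refine (lintegral_mono' muH_le_sg le_rfl).trans ?_
    rw [lintegral_smul_measure]; rfl
  have b2 : ∫⁻ w, ENNReal.ofReal (nwt μ₁ μ₂ (R₂ - t) * Ww α t R₂ * ξ (R₂ • w) ^ 2) ∂sg ≤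
      10000 * ∫⁻ w in sphere (0 : E3) 1,
      ENNReal.ofReal (nwt μ₁ μ₂ (R₂ - t) * Ww α t R₂ * ξ (R₂ • w) ^ 2) ∂μH[2] := by
    refine (lintegral_mono' sg_le_muH le_rfl).trans ?_
    rw [lintegral_smul_measure]; rfl
  have hone : ∀ x : ℝ≥0∞, x ≤ 10000 * x := fun x => le_mul_of_one_le_left' (by norm_num)
  have hCe : ENNReal.ofReal (10000 * C * 10000) = 10000 * ENNReal.ofReal C * 10000 := by
    rw [ENNReal.ofReal_mul (by positivity), ENNReal.ofReal_mul (by positivity)]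
    simp
  rw [hCe]
  refine (add_le_add_three b1 (hone _) (hone _)).trans ?_
  rw [← mul_add, ← mul_add, mul_assoc, mul_assoc]
  refine mul_le_mul_right (key.trans ?_) _
  refine mul_le_mul_right ?_ _
  rw [mul_add, mul_add]
  exact add_le_add_three b2 (hone _) (hone _)

lemma real_eq {μ : Measure E3} {h : E3 → ℝ} (hm : Measurable h) (h0 : ∀ x, 0 ≤ h x) (S : Set E3) :
    ∫ x in S, h x ∂μ = (∫⁻ x in S, ENNReal.ofReal (h x) ∂μ).toReal :=
  integral_eq_lintegral_of_nonneg_ae (Filter.Eventually.of_forall h0) hm.aestronglyMeasurable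

lemma main_real {μ₁ μ₂ : ℝ} (hμ₁ : -1 < μ₁) (hμ₂ : 0 < μ₂) :
    ∃ C : ℝ, 0 < C ∧ ∀ α : ℝ, α ≤ 2 → ∀ t : ℝ, 0 ≤ t → ∀ R₁ R₂ : ℝ, 0 ≤ R₁ → R₁ ≤ R₂ →
      ∀ ξ : E3 → ℝ, ContDiff ℝ 1 ξ →
      (∫ x in sphere (0 : E3) R₁, bd μ₁ μ₂ α t R₁ ξ x ∂μH[2])
        + (∫ x in ann (min R₁ t) (min R₂ t), bk (-2 - μ₁) α t ξ x)
        + (∫ x in ann (max R₁ t) (max R₂ t), bk (μ₂ - 1) α t ξ x) ≤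
      C *
       ((∫ x in sphere (0 : E3) R₂, bd μ₁ μ₂ α t R₂ ξ x ∂μH[2])
        + (∫ x in ann (min R₁ t) (min R₂ t), bk (-μ₁) α t (radialDeriv ξ) x)
        + (∫ x in ann (max R₁ t) (max R₂ t), bk (1 + μ₂) α t (radialDeriv ξ) x)) := by
  obtain ⟨C, hC, H⟩ := main_enn hμ₁ hμ₂
  refine ⟨C, hC, ?_⟩
  intro α hα t ht R₁ R₂ hR₁ hR ξ hξ
  have h := H α hα t ht R₁ R₂ hR₁ hR ξ hξ
  have hR₂ := hR₁.trans hR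
  have mξ := hξ.continuous.measurable
  have mr := radial_meas hξ
  have mbd : ∀ R, Measurable (bd μ₁ μ₂ α t R ξ) := fun R => by unfold bd; fun_prop
  have nbd : ∀ R, 0 ≤ R → ∀ x, 0 ≤ bd μ₁ μ₂ α t R ξ x := fun R hR x => by
    have := nwt_nonneg μ₁ μ₂ (R - t)
    unfold bd; positivity
  rw [real_eq (mbd R₁) (nbd R₁ hR₁), real_eq (mbd R₂) (nbd R₂ hR₂),
    real_eq (bk_meas mξ) (bk_nonneg ht ξ), real_eq (bk_meas mξ) (bk_nonneg ht ξ),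
    real_eq (bk_meas mr) (bk_nonneg ht _), real_eq (bk_meas mr) (bk_nonneg ht _)]
  have hann : ∀ a b, ann a b ⊆ closedBall (0 : E3) b := fun a b x hx => by simpa using hx.2
  have f0 := bd_fin (μ₁ := μ₁) (μ₂ := μ₂) (α := α) (t := t) hR₂ hξ.continuous
  have f1 := bk_fin (e := -μ₁) (α := α) ht hξ (hann (min R₁ t) (min R₂ t))
  have f2 := bk_fin (e := 1 + μ₂) (α := α) ht hξ (hann (max R₁ t) (max R₂ t))
  have fR := ENNReal.mul_ne_top (ENNReal.ofReal_ne_top (r := C))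
    (ENNReal.add_ne_top.2 ⟨ENNReal.add_ne_top.2 ⟨f0, f1⟩, f2⟩)
  have fL := ne_top_of_le_ne_top fR h
  have fL1 := (ENNReal.add_ne_top.1 fL).1
  have h' := ENNReal.toReal_mono fR h
  rw [ENNReal.toReal_mul, ENNReal.toReal_ofReal hC.le, ENNReal.toReal_add fL1 (ENNReal.add_ne_top.1 fL).2,
    ENNReal.toReal_add (ENNReal.add_ne_top.1 fL1).1 (ENNReal.add_ne_top.1 fL1).2,
    ENNReal.toReal_add (ENNReal.add_ne_top.2 ⟨f0, f1⟩) f2, ENNReal.toReal_add f0 f1] at h'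
  exact h'

lemma set_min {a ρ t : ℝ} (hρ : 0 ≤ ρ) (ht : 0 ≤ t) :
    {x : E3 | a ≤ ‖x‖ ∧ ENNReal.ofReal ‖x‖ ≤ min (ENNReal.ofReal ρ) (ENNReal.ofReal t)} =
      ann a (min ρ t) := by
  ext x
  change _ ∧ _ ↔ _ ∧ _
  rw [← ENNReal.ofReal_min, ENNReal.ofReal_le_ofReal_iff (le_min hρ ht)]

lemma set_max {a ρ t : ℝ} (hρ : 0 ≤ ρ) :
    {x : E3 | a ≤ ‖x‖ ∧ ENNReal.ofReal ‖x‖ ≤ max (ENNReal.ofReal ρ) (ENNReal.ofReal t)} =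
      ann a (max ρ t) := by
  ext x
  change _ ∧ _ ↔ _ ∧ _
  rw [← ENNReal.ofReal_max, ENNReal.ofReal_le_ofReal_iff (hρ.trans (le_max_left _ _))]

lemma int_tail {a b : ℝ} {h : E3 → ℝ} (hz : ∀ x, b < ‖x‖ → h x = 0) :
    ∫ x in {x : E3 | a ≤ ‖x‖}, h x = ∫ x in ann a b, h x := by
  have hm : MeasurableSet {x : E3 | a ≤ ‖x‖} := measurableSet_le measurable_const measurable_norm
  apply setIntegral_eq_of_subset_of_forall_sdiff_eq_zero hm (fun x hx => hx.1)
  intro x hx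
  apply hz
  by_contra hcon
  exact hx.2 ⟨hx.1, not_lt.1 hcon⟩

lemma main_final {μ₁ μ₂ : ℝ} (hμ₁ : -1 < μ₁) (hμ₂ : 0 < μ₂) :
    ∃ C > (0 : ℝ), ∀ α : ℝ, 0 ≤ α → α ≤ 2 → ∀ t : ℝ, 0 ≤ t →
      ∀ (R₁ : ℝ) (R₂ : ℝ≥0∞), 0 ≤ R₁ → ENNReal.ofReal R₁ < R₂ →
      ∀ ξ : E3 → ℝ, ContDiff ℝ 1 ξ →
        (R₂ = ⊤ → HasCompactSupport ξ) →
      (∫ x in sphere (0 : E3) R₁, bd μ₁ μ₂ α t R₁ ξ x ∂(μH[2]))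
        + (∫ x in {x : E3 |
              min R₁ t ≤ ‖x‖ ∧ ENNReal.ofReal ‖x‖ ≤ min R₂ (ENNReal.ofReal t)},
            bk (-2 - μ₁) α t ξ x)
        + (∫ x in {x : E3 |
              max R₁ t ≤ ‖x‖ ∧ ENNReal.ofReal ‖x‖ ≤ max R₂ (ENNReal.ofReal t)},
            bk (μ₂ - 1) α t ξ x)
      ≤ C * ((if R₂ = ⊤ then 0 else
              ∫ x in sphere (0 : E3) R₂.toReal, bd μ₁ μ₂ α t R₂.toReal ξ x ∂(μH[2]))
          + (∫ x in {x : E3 |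
                min R₁ t ≤ ‖x‖ ∧ ENNReal.ofReal ‖x‖ ≤ min R₂ (ENNReal.ofReal t)},
              bk (-μ₁) α t (radialDeriv ξ) x)
          + (∫ x in {x : E3 |
                max R₁ t ≤ ‖x‖ ∧ ENNReal.ofReal ‖x‖ ≤ max R₂ (ENNReal.ofReal t)},
              bk (1 + μ₂) α t (radialDeriv ξ) x)) := by
  obtain ⟨C, hC, H⟩ := main_real hμ₁ hμ₂
  refine ⟨C, hC, ?_⟩
  intro α _ hα t ht R₁ R₂ hR₁ hR ξ hξ hsupp
  by_cases htop : R₂ = ⊤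
  · subst htop
    obtain ⟨ρ₀, hρ₀⟩ := (hsupp rfl).isCompact.isBounded.subset_closedBall 0
    set ρ := max (ρ₀ + 1) (max R₁ t) with hρ
    have hρR : R₁ ≤ ρ := (le_max_left _ _).trans (le_max_right _ _)
    have hρt : t ≤ ρ := (le_max_right _ _).trans (le_max_right _ _)
    have hρ1 : ρ₀ + 1 ≤ ρ := le_max_left _ _
    have hns : ∀ x : E3, ρ ≤ ‖x‖ → x ∉ tsupport ξ := by
      intro x hx hx'
      have := hρ₀ hx'
      rw [mem_closedBall_zero_iff] at this
      linarith
    have z1 : ∀ x : E3, ρ ≤ ‖x‖ → ξ x = 0 := fun x hx => image_eq_zero_of_notMem_tsupport (hns x hx)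
    have z2 : ∀ x : E3, ρ ≤ ‖x‖ → radialDeriv ξ x = 0 := fun x hx => by
      rw [radialDeriv, fderiv_of_notMem_tsupport ℝ (hns x hx)]; rfl
    have h := H α hα t ht R₁ ρ hR₁ hρR ξ hξ
    have s0 : ∫ x in sphere (0 : E3) ρ, bd μ₁ μ₂ α t ρ ξ x ∂μH[2] = 0 := by
      apply setIntegral_eq_zero_of_forall_eq_zero
      intro x hx
      rw [mem_sphere_zero_iff_norm] at hx
      simp [bd, z1 x hx.ge]
    have e1 : {x : E3 | min R₁ t ≤ ‖x‖ ∧ ENNReal.ofReal ‖x‖ ≤ min ⊤ (ENNReal.ofReal t)} =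
        ann (min R₁ t) (min ρ t) := by
      ext x
      change _ ∧ _ ↔ _ ∧ _
      rw [min_eq_right le_top, min_eq_right hρt, ENNReal.ofReal_le_ofReal_iff ht]
    have e2 : {x : E3 | max R₁ t ≤ ‖x‖ ∧ ENNReal.ofReal ‖x‖ ≤ max ⊤ (ENNReal.ofReal t)} =
        {x : E3 | max R₁ t ≤ ‖x‖} := by
      ext x
      change _ ∧ _ ↔ _
      rw [max_eq_left le_top]
      exact ⟨fun h => h.1, fun h => ⟨h, le_top⟩⟩
    rw [if_pos rfl, e1, e2, int_tail (b := max ρ t), int_tail (b := max ρ t)]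
    · rwa [s0] at h
    · intro x hx
      simp [bk, z2 x ((le_max_left _ _).trans hx.le)]
    · intro x hx
      simp [bk, z1 x ((le_max_left _ _).trans hx.le)]
  · obtain ⟨ρ, hρ, rfl⟩ : ∃ ρ : ℝ, 0 ≤ ρ ∧ R₂ = ENNReal.ofReal ρ :=
      ⟨R₂.toReal, ENNReal.toReal_nonneg, (ENNReal.ofReal_toReal htop).symm⟩
    have hlt : R₁ ≤ ρ := ((ENNReal.ofReal_lt_ofReal_iff_of_nonneg hR₁).1 hR).le
    rw [if_neg htop, ENNReal.toReal_ofReal hρ, set_min hρ ht, set_max hρ]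
    exact H α hα t ht R₁ ρ hR₁ hlt ξ hξ

end HardyAux
end
/-- Localized weighted Hardy inequality on `ℝ³`, with boundary sphere
terms at radii `R₁` and `R₂` (the latter possibly `∞`, in which case the corresponding
sphere term is omitted and `ξ` is assumed compactly supported), and annular bulk terms
split at radius `t`.  The constant depends only on `μ₁, μ₂`. -/
theorem stmt7 (μ₁ μ₂ : ℝ) (hμ₁ : -1 < μ₁) (hμ₂ : 0 < μ₂) :
    ∃ C > (0 : ℝ), ∀ α : ℝ, 0 ≤ α → α ≤ 2 → ∀ t : ℝ, 0 ≤ t →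
      ∀ (R₁ : ℝ) (R₂ : ℝ≥0∞), 0 ≤ R₁ → ENNReal.ofReal R₁ < R₂ →
      ∀ ξ : EuclideanSpace ℝ (Fin 3) → ℝ, ContDiff ℝ 1 ξ →
        (R₂ = ⊤ → HasCompactSupport ξ) →
      (∫ x in Metric.sphere (0 : EuclideanSpace ℝ (Fin 3)) R₁,
          nwt μ₁ μ₂ (R₁ - t) * ξ x ^ 2 * (1 + t + R₁) ^ (-α) ∂(μH[2]))
        + (∫ x in {x : EuclideanSpace ℝ (Fin 3) |
              min R₁ t ≤ ‖x‖ ∧ ENNReal.ofReal ‖x‖ ≤ min R₂ (ENNReal.ofReal t)},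
            ξ x ^ 2 * (1 + |‖x‖ - t|) ^ (-2 - μ₁) * (1 + t + ‖x‖) ^ (-α))
        + (∫ x in {x : EuclideanSpace ℝ (Fin 3) |
              max R₁ t ≤ ‖x‖ ∧ ENNReal.ofReal ‖x‖ ≤ max R₂ (ENNReal.ofReal t)},
            ξ x ^ 2 * (1 + |‖x‖ - t|) ^ (μ₂ - 1) * (1 + t + ‖x‖) ^ (-α))
      ≤ C * ((if R₂ = ⊤ then 0 else
              ∫ x in Metric.sphere (0 : EuclideanSpace ℝ (Fin 3)) R₂.toReal,
                nwt μ₁ μ₂ (R₂.toReal - t) * ξ x ^ 2 * (1 + t + R₂.toReal) ^ (-α) ∂(μH[2]))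
          + (∫ x in {x : EuclideanSpace ℝ (Fin 3) |
                min R₁ t ≤ ‖x‖ ∧ ENNReal.ofReal ‖x‖ ≤ min R₂ (ENNReal.ofReal t)},
              radialDeriv ξ x ^ 2 * (1 + |‖x‖ - t|) ^ (-μ₁) * (1 + t + ‖x‖) ^ (-α))
          + (∫ x in {x : EuclideanSpace ℝ (Fin 3) |
                max R₁ t ≤ ‖x‖ ∧ ENNReal.ofReal ‖x‖ ≤ max R₂ (ENNReal.ofReal t)},
              radialDeriv ξ x ^ 2 * (1 + |‖x‖ - t|) ^ (1 + μ₂) * (1 + t + ‖x‖) ^ (-α))) := by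
  exact HardyAux.main_final hμ₁ hμ₂
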